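/- arXiv:2602.14086 — 2 statements merged into one kernel-verified Lean document; each statement's English description precedes it below -/
import Mathlib

section
/- Let H be a separable Hilbert space and ν a probability measure on H with finite second moment. Let {μ_k} be a sequence of regular probability measures on H with finite second moments, and let T*_k denote the unique optimal transport map (for quadratic cost) from μ_k to ν. If μ_k converges to a probability measure μ in the Wasserstein-2 metric, then there exist a subsequence {k_n} and an optimal transport plan π* ∈ Π(μ,ν) for the quadratic cost such that the plans π*_{k_n} = (Id × T*_{k_n})_# μ_{k_n} converge weakly to π*. -/
open MeasureTheory ProbabilityTheory Filter Topology Metric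
open scoped ENNReal NNReal

noncomputable section

local notation "⟪" x ", " y "⟫" => @inner ℝ _ _ x y

/-- The quadratic cost `c(x,y) = (1/2)‖x−y‖²`. -/
def quadCost {E : Type*} [NormedAddCommGroup E] (x y : E) : ℝ := (1 / 2) * ‖x - y‖ ^ 2

/-- A nondegenerate Gaussian measure on an inner product space: every one-dimensional
projection is a real Gaussian with strictly positive variance (for nonzero directions). -/
def IsNondegGaussian {E : Type*} [NormedAddCommGroup E] [InnerProductSpace ℝ E]
    [MeasurableSpace E] (γ : Measure E) : Prop :=
  IsProbabilityMeasure γ ∧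
    ∀ h : E, ∃ (m : ℝ) (v : ℝ≥0), (h ≠ 0 → 0 < v) ∧
      γ.map (fun x => ⟪x, h⟫) = gaussianReal m v

/-- A Gaussian null set: a Borel set negligible for every nondegenerate Gaussian measure. -/
def IsGaussianNullSet {E : Type*} [NormedAddCommGroup E] [InnerProductSpace ℝ E]
    [MeasurableSpace E] (N : Set E) : Prop :=
  MeasurableSet N ∧ ∀ γ : Measure E, IsNondegGaussian γ → γ N = 0

/-- A regular measure: one assigning zero mass to every Gaussian null set. -/
def IsRegularMeasure {E : Type*} [NormedAddCommGroup E] [InnerProductSpace ℝ E]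
    [MeasurableSpace E] (μ : Measure E) : Prop :=
  ∀ N : Set E, IsGaussianNullSet N → μ N = 0

/-- Finite second moment. -/
def HasFiniteSecondMoment {E : Type*} [NormedAddCommGroup E] [MeasurableSpace E]
    (μ : Measure E) : Prop :=
  Integrable (fun x => ‖x‖ ^ 2) μ

/-- `π` is a coupling of `μ` and `ν`. -/
def IsCoupling {E : Type*} [MeasurableSpace E] (μ ν : Measure E) (π : Measure (E × E)) : Prop :=
  π.map Prod.fst = μ ∧ π.map Prod.snd = ν

/-- The Kantorovich optimal transport cost for the quadratic cost. -/
def kantorovichCost {E : Type*} [NormedAddCommGroup E] [MeasurableSpace E]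
    (μ ν : Measure E) : ℝ :=
  sInf {r : ℝ | ∃ π : Measure (E × E), IsCoupling μ ν π ∧ r = ∫ p, quadCost p.1 p.2 ∂π}

/-- The c-transform `V^c(x) = inf_y [c(x,y) − V(y)]`. -/
def cTransform {E : Type*} [NormedAddCommGroup E] (V : E → ℝ) (x : E) : ℝ :=
  ⨅ y : E, (quadCost x y - V y)

/-- c-concavity: `V` is the c-transform of some function. -/
def CConcave {E : Type*} [NormedAddCommGroup E] (V : E → ℝ) : Prop :=
  ∃ φ : E → ℝ, V = fun y => ⨅ x : E, (quadCost x y - φ x)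

/-- A Monge optimal transport map for the quadratic cost. -/
def IsMongeMap {E : Type*} [NormedAddCommGroup E] [MeasurableSpace E]
    (μ ν : Measure E) (T : E → E) : Prop :=
  Measurable T ∧ μ.map T = ν ∧
    ∀ S : E → E, Measurable S → μ.map S = ν →
      ∫ x, quadCost x (T x) ∂μ ≤ ∫ x, quadCost x (S x) ∂μ

/-- The Kantorovich dual functional `J(V) = ∫ V^c dμ + ∫ V dν`. -/
def dualValue {E : Type*} [NormedAddCommGroup E] [MeasurableSpace E]
    (μ ν : Measure E) (V : E → ℝ) : ℝ :=
  ∫ x, cTransform V x ∂μ + ∫ y, V y ∂ν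

/-- A Kantorovich potential: a c-concave function whose dual value equals the
Kantorovich optimal transport cost. -/
def IsKantorovichPotential {E : Type*} [NormedAddCommGroup E] [MeasurableSpace E]
    (μ ν : Measure E) (V : E → ℝ) : Prop :=
  CConcave V ∧ dualValue μ ν V = kantorovichCost μ ν

/-- The semi-dual objective `L(V,T)`. -/
def LObj {E : Type*} [NormedAddCommGroup E] [MeasurableSpace E]
    (μ ν : Measure E) (V : E → ℝ) (T : E → E) : ℝ :=
  ∫ x, (quadCost x (T x) - V (T x)) ∂μ + ∫ y, V y ∂ν

/-- The (topological) support of a measure. -/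
def measSupport {E : Type*} [TopologicalSpace E] [MeasurableSpace E] (ν : Measure E) : Set E :=
  {y | ∀ U : Set E, IsOpen U → y ∈ U → ν U ≠ 0}

/-- A centered Gaussian measure with covariance operator `Q`. -/
def IsCenteredGaussianCov {E : Type*} [NormedAddCommGroup E] [InnerProductSpace ℝ E]
    [MeasurableSpace E] (γ : Measure E) (Q : E →L[ℝ] E) : Prop :=
  IsProbabilityMeasure γ ∧
    ∀ h : E, γ.map (fun x => ⟪x, h⟫) = gaussianReal 0 (Real.toNNReal ⟪Q h, h⟫)

/-- A covariance operator: bounded linear, self-adjoint, positive and trace-class. -/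
def IsCovarianceOp {E : Type*} [NormedAddCommGroup E] [InnerProductSpace ℝ E]
    (Q : E →L[ℝ] E) : Prop :=
  (∀ x y : E, ⟪Q x, y⟫ = ⟪x, Q y⟫) ∧ (∀ x : E, 0 ≤ ⟪Q x, x⟫) ∧
    ∃ C : ℝ, ∀ s : Finset E, Orthonormal ℝ (fun x : s => (x : E)) →
      ∑ x ∈ s, ⟪Q x, x⟫ ≤ C

/-- Convolution of two measures on an additive group: the law of the sum of independent
random vectors with the given laws. -/
def mconv {E : Type*} [Add E] [MeasurableSpace E] (μ ν : Measure E) : Measure E :=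
  (μ.prod ν).map (fun p => p.1 + p.2)

/-- Squared Wasserstein-2 distance (as infimum of coupling costs). -/
def W2sq {E : Type*} [NormedAddCommGroup E] [MeasurableSpace E] (μ ν : Measure E) : ℝ :=
  sInf {r : ℝ | ∃ π : Measure (E × E), IsCoupling μ ν π ∧ r = ∫ p, ‖p.1 - p.2‖ ^ 2 ∂π}


theorem exists_unif {X : Type*} [MeasurableSpace X] [StandardBorelSpace X]
    (μ : Measure X) [IsProbabilityMeasure μ] (hμ : ∀ x, μ {x} = 0) :
    ∃ U : X → unitInterval, Measurable U ∧ μ.map U = volume := by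
  have he := measurableEmbedding_embeddingReal X
  set e := embeddingReal X
  set m := μ.map e with hm
  have : IsProbabilityMeasure m := Measure.isProbabilityMeasure_map he.measurable.aemeasurable
  have hatom : ∀ t, m {t} = 0 := by
    intro t
    rw [hm, Measure.map_apply he.measurable (measurableSet_singleton t)]
    have hs : (e ⁻¹' {t}).Subsingleton := by
      intro a ha b hb
      exact he.injective (ha.trans hb.symm)
    rcases hs.eq_empty_or_singleton with h | ⟨x, h⟩ <;> simp [h, hμ]
  set F := cdf m
  have hmono : Monotone F := monotone_cdf m
  have hcont : Continuous F := by
    rw [continuous_iff_continuousAt]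
    intro t
    have h1 : F.measure {t} = 0 := by rw [measure_cdf]; exact hatom t
    rw [StieltjesFunction.measure_singleton] at h1
    have h2 : Function.leftLim F t = F t := by
      have := ENNReal.ofReal_eq_zero.1 h1
      have := hmono.leftLim_le (le_refl t)
      linarith
    have h3 : ContinuousWithinAt F (Set.Iio t) t :=
      (hmono.continuousWithinAt_Iio_iff_leftLim_eq).2 h2
    have h4 : ContinuousWithinAt F (Set.Ici t) t := F.right_continuous t
    exact continuousAt_iff_continuous_left'_right'.2 ⟨h3, h4.mono Set.Ioi_subset_Ici_self⟩
  have hIVT : ∀ t, 0 < t → t < 1 → ∃ s, F s = t := by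
    intro t h0 h1
    have a := ((tendsto_cdf_atBot m).eventually (gt_mem_nhds h0)).exists
    have b := ((tendsto_cdf_atTop m).eventually (lt_mem_nhds h1)).exists
    obtain ⟨a, ha⟩ := a
    obtain ⟨b, hb⟩ := b
    exact mem_range_of_exists_le_of_exists_ge hcont ⟨a, ha.le⟩ ⟨b, hb.le⟩
  have hge : ∀ t, 0 ≤ t → t ≤ 1 → ENNReal.ofReal t ≤ m {x | F x ≤ t} := by
    intro t h0 h1
    rcases h0.eq_or_lt with rfl | h0
    · simp
    rcases h1.eq_or_lt with rfl | h1
    · have : {x | F x ≤ 1} = Set.univ := by ext x; simp [F, cdf_le_one]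
      simp [this]
    obtain ⟨s, hs⟩ := hIVT t h0 h1
    rw [← hs, ofReal_cdf]
    exact measure_mono fun x hx => hmono hx
  have hle : ∀ t, 0 < t → t < 1 → m {x | F x < t} ≤ ENNReal.ofReal t := by
    intro t h0 h1
    obtain ⟨s, hs⟩ := hIVT t h0 h1
    conv_rhs => rw [← hs]
    rw [ofReal_cdf]
    refine measure_mono fun x hx => ?_
    by_contra h
    have : F s ≤ F x := hmono (not_le.1 h).le
    rw [hs] at this
    exact absurd hx (not_lt.2 this)
  have heq : ∀ t, 0 ≤ t → t ≤ 1 → m {x | F x ≤ t} = ENNReal.ofReal t := by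
    intro t h0 h1
    refine le_antisymm ?_ (hge t h0 h1)
    rcases h1.eq_or_lt with rfl | h1
    · simpa using prob_le_one
    have hlim : Tendsto (fun u => ENNReal.ofReal u) (𝓝[>] t) (𝓝 (ENNReal.ofReal t)) :=
      (ENNReal.continuous_ofReal.tendsto t).mono_left nhdsWithin_le_nhds
    refine ge_of_tendsto hlim ?_
    filter_upwards [Ioo_mem_nhdsGT h1] with u hu
    exact (measure_mono fun x (hx : F x ≤ t) => lt_of_le_of_lt hx hu.1).trans
      (hle u (h0.trans_lt hu.1) hu.2)
  let U : ℝ → unitInterval := fun x => ⟨F x, cdf_nonneg m x, cdf_le_one m x⟩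
  have hU : Measurable U := hmono.measurable.subtype_mk
  refine ⟨U ∘ e, hU.comp he.measurable, ?_⟩
  rw [← Measure.map_map hU he.measurable]
  have : IsProbabilityMeasure (m.map U) := Measure.isProbabilityMeasure_map hU.aemeasurable
  refine Measure.ext_of_Iic _ _ fun t => ?_
  rw [Measure.map_apply hU measurableSet_Iic, unitInterval.volume_Iic, ← heq t t.2.1 t.2.2]
  rfl

theorem exists_map_prob {X Y : Type*} [MeasurableSpace X] [StandardBorelSpace X]
    [MeasurableSpace Y] [StandardBorelSpace Y] [Nonempty Y]
    (μ : Measure X) [IsProbabilityMeasure μ] (hμ : ∀ x, μ {x} = 0)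
    (ρ : Measure Y) [IsProbabilityMeasure ρ] :
    ∃ T : X → Y, Measurable T ∧ μ.map T = ρ := by
  obtain ⟨U, hU, hUm⟩ := exists_unif μ hμ
  obtain ⟨f, hf, hfm⟩ := ρ.exists_measurable_map_eq
  exact ⟨f ∘ U, hf.comp hU, by rw [← Measure.map_map hf hU, hUm, hfm]⟩

theorem exists_piece {X Y : Type*} [MeasurableSpace X] [StandardBorelSpace X]
    [MeasurableSpace Y] [StandardBorelSpace Y] [Nonempty Y]
    (γ : Measure (X × Y)) [IsProbabilityMeasure γ] (hμ : ∀ x, (γ.map Prod.fst) {x} = 0)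
    (A : Set X) (hA : MeasurableSet A) :
    ∃ T : X → Y, Measurable T ∧ ∀ B, MeasurableSet B →
      (γ.map Prod.fst) (A ∩ T ⁻¹' B) = γ (Prod.fst ⁻¹' A ∩ Prod.snd ⁻¹' B) := by
  set μ := γ.map Prod.fst with hμd
  have : IsProbabilityMeasure μ := Measure.isProbabilityMeasure_map measurable_fst.aemeasurable
  have hAA : μ A = γ (Prod.fst ⁻¹' A) := Measure.map_apply measurable_fst hA
  by_cases h0 : μ A = 0
  · obtain ⟨y⟩ := ‹Nonempty Y›
    refine ⟨fun _ => y, measurable_const, fun B hB => ?_⟩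
    rw [measure_mono_null Set.inter_subset_left h0,
      measure_mono_null Set.inter_subset_left (hAA ▸ h0)]
  · have : IsProbabilityMeasure (cond μ A) := cond_isProbabilityMeasure h0
    have : IsProbabilityMeasure (cond γ (Prod.fst ⁻¹' A)) :=
      cond_isProbabilityMeasure (hAA ▸ h0)
    have : IsProbabilityMeasure ((cond γ (Prod.fst ⁻¹' A)).map Prod.snd) :=
      Measure.isProbabilityMeasure_map measurable_snd.aemeasurable
    obtain ⟨T, hT, hTm⟩ := exists_map_prob (cond μ A)
      (fun x => cond_absolutelyContinuous (hμ x)) ((cond γ (Prod.fst ⁻¹' A)).map Prod.snd)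
    refine ⟨T, hT, fun B hB => ?_⟩
    have := congrArg (fun m => m B) hTm
    simp only [Measure.map_apply hT hB, Measure.map_apply measurable_snd hB] at this
    rw [cond_apply hA, cond_apply (measurable_fst hA), ← hAA] at this
    exact (ENNReal.mul_right_inj (ENNReal.inv_ne_zero.2 (measure_ne_top _ _))
      (ENNReal.inv_ne_top.2 h0)).1 this

theorem exists_quant {X Y : Type*} [MeasurableSpace X] [StandardBorelSpace X]
    [MeasurableSpace Y] [StandardBorelSpace Y] [Nonempty Y]
    (γ : Measure (X × Y)) [IsProbabilityMeasure γ] (hμ : ∀ x, (γ.map Prod.fst) {x} = 0)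
    (q : X → ℕ) (hq : Measurable q) :
    ∃ T : X → Y, Measurable T ∧
      (γ.map Prod.fst).map (fun x => (q x, T x)) = γ.map (fun p => (q p.1, p.2)) := by
  choose T hT hTB using fun n : ℕ =>
    exists_piece γ hμ (q ⁻¹' {n}) (hq (measurableSet_singleton n))
  have hTT : Measurable fun x => T (q x) x := by
    have : Measurable fun p : ℕ × X => T p.1 p.2 := measurable_from_prod_countable_right hT
    exact this.comp (hq.prodMk measurable_id)
  refine ⟨fun x => T (q x) x, hTT, ?_⟩
  ext s hs
  have hm1 : Measurable fun x => (q x, T (q x) x) := hq.prodMk hTT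
  have hm2 : Measurable fun p : X × Y => (q p.1, p.2) :=
    (hq.comp measurable_fst).prodMk measurable_snd
  rw [Measure.map_apply hm1 hs, Measure.map_apply hm2 hs]
  have hsn : ∀ n : ℕ, MeasurableSet (Prod.mk n ⁻¹' s) := fun n => measurable_prodMk_left hs
  have e1 : (fun x => (q x, T (q x) x)) ⁻¹' s
      = ⋃ n, (q ⁻¹' {n} ∩ T n ⁻¹' (Prod.mk n ⁻¹' s)) := by
    ext x; simp
  have e2 : (fun p : X × Y => (q p.1, p.2)) ⁻¹' s
      = ⋃ n, (Prod.fst ⁻¹' (q ⁻¹' {n}) ∩ Prod.snd ⁻¹' (Prod.mk n ⁻¹' s)) := by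
    ext x; simp
  rw [e1, e2, measure_iUnion, measure_iUnion]
  · exact tsum_congr fun n => hTB n _ (hsn n)
  · intro i j hij
    refine Set.disjoint_left.2 fun x hx hy => hij ?_
    simp only [Set.mem_inter_iff, Set.mem_preimage, Set.mem_singleton_iff] at hx hy
    exact hx.1.symm.trans hy.1
  · exact fun n => (measurable_fst (hq (measurableSet_singleton n))).inter (measurable_snd (hsn n))
  · intro i j hij
    refine Set.disjoint_left.2 fun x hx hy => hij ?_
    simp only [Set.mem_inter_iff, Set.mem_preimage, Set.mem_singleton_iff] at hx hy
    exact hx.1.symm.trans hy.1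
  · exact fun n => (hq (measurableSet_singleton n)).inter (hT n (hsn n))

/-- Bundle a probability measure. -/
def mkP {X : Type*} [MeasurableSpace X] (μ : Measure X) (h : IsProbabilityMeasure μ) :
    ProbabilityMeasure X := ⟨μ, h⟩

section helpers

set_option linter.unusedSectionVars false

variable {H : Type*} [NormedAddCommGroup H] [InnerProductSpace ℝ H] [CompleteSpace H]
    [SecondCountableTopology H] [MeasurableSpace H] [BorelSpace H]

/-- The `L²` size of a plan. -/
def planN (π : Measure (H × H)) : ℝ≥0∞ := eLpNorm (fun p : H × H => p.1 - p.2) 2 π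

theorem planN_sq (π : Measure (H × H)) :
    planN π ^ 2 = ∫⁻ p, ENNReal.ofReal (‖p.1 - p.2‖ ^ 2) ∂π := by
  have h := eLpNorm_nnreal_pow_eq_lintegral (μ := π) (f := fun p : H × H => p.1 - p.2)
    (p := 2) (by norm_num)
  have e : ((2 : ℝ≥0) : ℝ) = ((2 : ℕ) : ℝ) := by norm_num
  rw [e, ENNReal.rpow_natCast] at h
  unfold planN
  refine Eq.trans h ?_
  refine lintegral_congr fun p => ?_
  rw [ENNReal.rpow_natCast, ENNReal.ofReal_pow (norm_nonneg _), ofReal_norm_eq_enorm]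

theorem integral_sq_eq (π : Measure (H × H)) :
    ∫ p, ‖p.1 - p.2‖ ^ 2 ∂π = (planN π ^ 2).toReal := by
  rw [planN_sq, integral_eq_lintegral_of_nonneg_ae]
  · exact Eventually.of_forall fun p => by positivity
  · exact Continuous.aestronglyMeasurable (by fun_prop)

theorem integral_cost_eq (π : Measure (H × H)) :
    ∫ p, quadCost p.1 p.2 ∂π = (1 / 2) * (planN π ^ 2).toReal := by
  rw [← integral_sq_eq]
  unfold quadCost
  exact integral_const_mul _ _

theorem memLp_id {μ : Measure H} (h : HasFiniteSecondMoment μ) : MemLp (fun x : H => x) 2 μ :=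
  (memLp_two_iff_integrable_sq_norm continuous_id.aestronglyMeasurable).2 h

theorem planN_ne_top {μ ν : Measure H} (hμ : HasFiniteSecondMoment μ)
    (hν : HasFiniteSecondMoment ν) {π : Measure (H × H)} (hπ : IsCoupling μ ν π) :
    planN π ≠ ∞ := by
  have h1 : MemLp (fun p : H × H => p.1) 2 π :=
    (memLp_id hμ).comp_measurePreserving ⟨measurable_fst, hπ.1⟩
  have h2 : MemLp (fun p : H × H => p.2) 2 π :=
    (memLp_id hν).comp_measurePreserving ⟨measurable_snd, hπ.2⟩
  exact (h1.sub h2).eLpNorm_ne_top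

theorem coupling_prob {μ ν : Measure H} [IsProbabilityMeasure μ] {π : Measure (H × H)}
    (hπ : IsCoupling μ ν π) : IsProbabilityMeasure π := by
  refine ⟨?_⟩
  have := congrArg (fun m => m Set.univ) hπ.1
  simpa [Measure.map_apply measurable_fst MeasurableSet.univ] using this

theorem exists_glue {μ ρ ν : Measure H} [IsProbabilityMeasure μ] [IsProbabilityMeasure ρ]
    {σ π : Measure (H × H)} (hσ : IsCoupling μ ρ σ) (hπ : IsCoupling ρ ν π) :
    ∃ γ, IsCoupling μ ν γ ∧ planN γ ≤ planN σ + planN π := by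
  have := coupling_prob hσ
  have := coupling_prob hπ
  let κ : Kernel (H × H) H := π.condKernel.comap Prod.snd measurable_snd
  let θ : Measure ((H × H) × H) := σ ⊗ₘ κ
  have h12 : θ.map Prod.fst = σ := Measure.fst_compProd σ κ
  have hm : Measurable fun p : (H × H) × H => (p.1.2, p.2) := by fun_prop
  have h23 : θ.map (fun p => (p.1.2, p.2)) = π := by
    conv_rhs => rw [← π.disintegrate π.condKernel]
    have hf : π.fst = σ.map Prod.snd := by rw [hσ.2]; exact hπ.1
    ext s hs
    rw [Measure.map_apply hm hs, Measure.compProd_apply (hm hs), Measure.compProd_apply hs, hf,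
      lintegral_map (Kernel.measurable_kernel_prodMk_left hs) measurable_snd]
    rfl
  have hm13 : Measurable fun p : (H × H) × H => (p.1.1, p.2) := by fun_prop
  refine ⟨θ.map (fun p => (p.1.1, p.2)), ⟨?_, ?_⟩, ?_⟩
  · rw [Measure.map_map measurable_fst hm13]
    conv_rhs => rw [← hσ.1, ← h12]
    rw [Measure.map_map measurable_fst measurable_fst]
    rfl
  · rw [Measure.map_map measurable_snd hm13]
    conv_rhs => rw [← hπ.2, ← h23]
    rw [Measure.map_map measurable_snd hm]
    rfl
  · have c : Continuous fun p : H × H => p.1 - p.2 := by fun_prop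
    have e1 : planN σ = eLpNorm (fun p : (H × H) × H => p.1.1 - p.1.2) 2 θ := by
      unfold planN
      conv_lhs => rw [← h12]
      rw [eLpNorm_map_measure c.aestronglyMeasurable measurable_fst.aemeasurable]
      rfl
    have e2 : planN π = eLpNorm (fun p : (H × H) × H => p.1.2 - p.2) 2 θ := by
      unfold planN
      conv_lhs => rw [← h23]
      rw [eLpNorm_map_measure c.aestronglyMeasurable hm.aemeasurable]
      rfl
    rw [e1, e2]
    unfold planN
    rw [eLpNorm_map_measure c.aestronglyMeasurable hm13.aemeasurable]
    refine le_trans (le_of_eq ?_) (eLpNorm_add_le (Continuous.aestronglyMeasurable (by fun_prop))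
      (Continuous.aestronglyMeasurable (by fun_prop)) (by norm_num))
    congr 1
    ext p
    simp

theorem exists_approx_map {μ ν : Measure H} [IsProbabilityMeasure μ] (hμ : ∀ x, μ {x} = 0)
    {γ : Measure (H × H)} (hγ : IsCoupling μ ν γ) (δ : ℝ) (hδ : 0 < δ) :
    ∃ S : H → H, Measurable S ∧ μ.map S = ν ∧
      eLpNorm (fun x => x - S x) 2 μ ≤ planN γ + 2 * ENNReal.ofReal δ := by
  classical
  have := coupling_prob hγ
  have hd := TopologicalSpace.denseRange_denseSeq H
  set d := TopologicalSpace.denseSeq H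
  have hex : ∀ x : H, ∃ n, dist x (d n) < δ := fun x => hd.exists_dist_lt x hδ
  let q : H → ℕ := fun x => Nat.find (hex x)
  have hq : Measurable q := measurable_find hex fun k => by
    exact measurableSet_lt (by fun_prop) measurable_const
  have hqd : ∀ x, ‖x - d (q x)‖ ≤ δ := fun x => by
    rw [← dist_eq_norm]; exact (Nat.find_spec (hex x)).le
  obtain ⟨S, hS, hSm⟩ := exists_quant γ (by rw [hγ.1]; exact hμ) q hq
  rw [hγ.1] at hSm
  have hm1 : Measurable fun x => (q x, S x) := hq.prodMk hS
  have hm2 : Measurable fun p : H × H => (q p.1, p.2) :=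
    (hq.comp measurable_fst).prodMk measurable_snd
  have hdq : Measurable fun x => d (q x) := (measurable_from_top (f := d)).comp hq
  refine ⟨S, hS, ?_, ?_⟩
  · have := congrArg (fun m => m.map Prod.snd) hSm
    simp only [Measure.map_map measurable_snd hm1, Measure.map_map measurable_snd hm2] at this
    rw [← hγ.2]
    exact this
  · have hg : Measurable fun p : ℕ × H => d p.1 - p.2 :=
      ((measurable_from_top (f := d)).comp measurable_fst).sub measurable_snd
    have e : eLpNorm (fun x => d (q x) - S x) 2 μ
        = eLpNorm (fun p : H × H => d (q p.1) - p.2) 2 γ := by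
      have h := congrArg (fun m => eLpNorm (fun p : ℕ × H => d p.1 - p.2) 2 m) hSm
      rw [eLpNorm_map_measure hg.aestronglyMeasurable hm1.aemeasurable,
        eLpNorm_map_measure hg.aestronglyMeasurable hm2.aemeasurable] at h
      exact h
    have b1 : eLpNorm (fun x => x - d (q x)) 2 μ ≤ ENNReal.ofReal δ := by
      have := eLpNorm_le_of_ae_bound (p := 2) (μ := μ) (Eventually.of_forall hqd)
      simpa using this
    have b2 : eLpNorm (fun p : H × H => d (q p.1) - p.1) 2 γ ≤ ENNReal.ofReal δ := by
      have := eLpNorm_le_of_ae_bound (p := 2) (μ := γ) (f := fun p : H × H => d (q p.1) - p.1)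
        (C := δ) (Eventually.of_forall fun p => by rw [norm_sub_rev]; exact hqd p.1)
      simpa using this
    have t1 : eLpNorm (fun x => x - S x) 2 μ
        ≤ eLpNorm (fun x => x - d (q x)) 2 μ + eLpNorm (fun x => d (q x) - S x) 2 μ := by
      refine le_trans (le_of_eq ?_) (eLpNorm_add_le
        (measurable_id.sub hdq).aestronglyMeasurable
        (hdq.sub hS).aestronglyMeasurable (by norm_num))
      congr 1
      ext x
      simp
    have t2 : eLpNorm (fun p : H × H => d (q p.1) - p.2) 2 γ
        ≤ eLpNorm (fun p : H × H => d (q p.1) - p.1) 2 γ + planN γ := by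
      refine le_trans (le_of_eq ?_) (eLpNorm_add_le
        ((hdq.comp measurable_fst).sub measurable_fst).aestronglyMeasurable
        (measurable_fst.sub measurable_snd).aestronglyMeasurable (by norm_num))
      congr 1
      ext x
      simp
    calc _ ≤ ENNReal.ofReal δ + (ENNReal.ofReal δ + planN γ) := by
            refine t1.trans (add_le_add b1 ?_)
            rw [e]
            exact t2.trans (add_le_add b2 le_rfl)
      _ = _ := by ring

theorem graph_coupling {μ ν : Measure H} {S : H → H} (hS : Measurable S) (h : μ.map S = ν) :
    IsCoupling μ ν (μ.map fun x => (x, S x)) := by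
  have hm : Measurable fun x => (x, S x) := measurable_id.prodMk hS
  refine ⟨?_, ?_⟩
  · rw [Measure.map_map measurable_fst hm]; exact Measure.map_id
  · rw [Measure.map_map measurable_snd hm]; exact h

theorem graph_planN {μ : Measure H} {S : H → H} (hS : Measurable S) :
    planN (μ.map fun x => (x, S x)) = eLpNorm (fun x => x - S x) 2 μ := by
  have hm : Measurable fun x => (x, S x) := measurable_id.prodMk hS
  have c : Continuous fun p : H × H => p.1 - p.2 := by fun_prop
  unfold planN
  rw [eLpNorm_map_measure c.aestronglyMeasurable hm.aemeasurable]
  rfl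

theorem graph_cost {μ : Measure H} {S : H → H} (hS : Measurable S) :
    ∫ x, quadCost x (S x) ∂μ = (1 / 2) * (eLpNorm (fun x => x - S x) 2 μ ^ 2).toReal := by
  have hm : Measurable fun x => (x, S x) := measurable_id.prodMk hS
  rw [← graph_planN hS, ← integral_cost_eq, integral_map hm.aemeasurable]
  have : Continuous fun p : H × H => quadCost p.1 p.2 := by unfold quadCost; fun_prop
  exact this.aestronglyMeasurable

theorem regular_atomless [Nontrivial H] {μ : Measure H} (h : IsRegularMeasure μ) (x : H) :
    μ {x} = 0 := by
  refine h _ ⟨measurableSet_singleton x, fun γ hγ => ?_⟩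
  obtain ⟨v, hv⟩ := exists_ne (0 : H)
  obtain ⟨m, s, hs, he⟩ := hγ.2 v
  have hs' : s ≠ 0 := (hs hv).ne'
  have := nullSingletonClass_gaussianReal (μ := m) hs'
  have h0 : (γ.map fun y => ⟪y, v⟫) {⟪x, v⟫} = 0 := by rw [he]; exact measure_singleton _
  rw [Measure.map_apply (by fun_prop) (measurableSet_singleton _)] at h0
  exact measure_mono_null (by intro y hy; rw [Set.mem_singleton_iff.1 hy]; rfl) h0

theorem monge_le {μ ν : Measure H} [IsProbabilityMeasure μ] (hreg : IsRegularMeasure μ)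
    (hμ : HasFiniteSecondMoment μ) (hν : HasFiniteSecondMoment ν) {T : H → H}
    (hT : IsMongeMap μ ν T) {γ : Measure (H × H)} (hγ : IsCoupling μ ν γ) :
    planN (μ.map fun x => (x, T x)) ≤ planN γ := by
  rcases subsingleton_or_nontrivial H with hs | hs
  · have : (fun p : H × H => p.1 - p.2) = 0 := by ext p; exact Subsingleton.elim _ _
    unfold planN
    rw [this]
    simp
  refine ENNReal.le_of_forall_pos_le_add fun ε hε _ => ?_
  obtain ⟨S, hS, hSm, hle⟩ := exists_approx_map (regular_atomless hreg) hγ (ε / 2) (by positivity)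
  have h2 : 2 * ENNReal.ofReal ((ε : ℝ) / 2) = ε := by
    rw [← ENNReal.ofReal_ofNat, ← ENNReal.ofReal_mul (by norm_num)]
    rw [mul_div_cancel₀ _ (by norm_num), ENNReal.ofReal_coe_nnreal]
  rw [h2] at hle
  refine le_trans ?_ hle
  have h := hT.2.2 S hS hSm
  rw [graph_cost hS, graph_cost hT.1] at h
  have f1 := planN_ne_top hμ hν (graph_coupling hS hSm)
  have f2 := planN_ne_top hμ hν (graph_coupling hT.1 hT.2.1)
  rw [graph_planN hS] at f1
  rw [graph_planN hT.1] at f2 ⊢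
  have h' := (ENNReal.toReal_le_toReal (ENNReal.pow_ne_top f2) (ENNReal.pow_ne_top f1)).1
    (by linarith)
  exact (ENNReal.pow_le_pow_left_iff (by norm_num)).1 h'

theorem tendsto_weak {ν : Measure H} [IsProbabilityMeasure ν] {μ : ℕ → Measure H}
    (hp : ∀ k, IsProbabilityMeasure (μ k)) (hν : HasFiniteSecondMoment ν)
    (hμ : ∀ k, HasFiniteSecondMoment (μ k)) (σ : ℕ → Measure (H × H))
    (hσ : ∀ k, IsCoupling (μ k) ν (σ k)) (h0 : Tendsto (fun k => planN (σ k)) atTop (𝓝 0)) :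
    Tendsto (fun k => mkP (μ k) (hp k)) atTop
      (𝓝 (mkP ν inferInstance)) := by
  rw [tendsto_iff_forall_lipschitz_integral_tendsto]
  rintro f ⟨C, hC⟩ ⟨L, hL⟩
  have hfc := hL.continuous
  have hbd : ∀ x, ‖f x‖ ≤ ‖f 0‖ + C := fun x => by
    have h1 := hC x 0
    rw [dist_eq_norm] at h1
    have := norm_le_norm_add_norm_sub' (f x) (f 0)
    linarith
  rw [tendsto_iff_norm_sub_tendsto_zero]
  have hlim : Tendsto (fun k => L * (planN (σ k)).toReal) atTop (𝓝 0) := by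
    have := ((ENNReal.tendsto_toReal ENNReal.zero_ne_top).comp h0).const_mul (L : ℝ)
    simpa using this
  refine squeeze_zero (fun _ => norm_nonneg _) (fun k => ?_) hlim
  have := hp k
  have := coupling_prob (hσ k)
  change ‖∫ x, f x ∂(μ k) - ∫ x, f x ∂ν‖ ≤ _
  have hfin := planN_ne_top (hμ k) hν (hσ k)
  have i1 : ∫ x, f x ∂(μ k) = ∫ p, f p.1 ∂(σ k) := by
    rw [← (hσ k).1, integral_map measurable_fst.aemeasurable hfc.aestronglyMeasurable]
  have i2 : ∫ x, f x ∂ν = ∫ p, f p.2 ∂(σ k) := by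
    rw [← (hσ k).2, integral_map measurable_snd.aemeasurable hfc.aestronglyMeasurable]
  have j1 : Integrable (fun p : H × H => f p.1) (σ k) :=
    Integrable.of_bound (Continuous.aestronglyMeasurable (by fun_prop)) (‖f 0‖ + C)
      (Eventually.of_forall fun p => hbd p.1)
  have j2 : Integrable (fun p : H × H => f p.2) (σ k) :=
    Integrable.of_bound (Continuous.aestronglyMeasurable (by fun_prop)) (‖f 0‖ + C)
      (Eventually.of_forall fun p => hbd p.2)
  have c : Continuous fun p : H × H => p.1 - p.2 := by fun_prop
  have hle : eLpNorm (fun p : H × H => p.1 - p.2) 1 (σ k) ≤ planN (σ k) :=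
    eLpNorm_le_eLpNorm_of_exponent_le (by norm_num) c.aestronglyMeasurable
  have j3 : Integrable (fun p : H × H => p.1 - p.2) (σ k) :=
    memLp_one_iff_integrable.1 ⟨c.aestronglyMeasurable, hle.trans_lt hfin.lt_top⟩
  rw [i1, i2, ← integral_sub j1 j2]
  calc _ ≤ ∫ p, L * ‖p.1 - p.2‖ ∂(σ k) := by
        refine norm_integral_le_of_norm_le (j3.norm.const_mul _) (Eventually.of_forall fun p => ?_)
        rw [← dist_eq_norm, ← dist_eq_norm]
        exact hL.dist_le_mul _ _
    _ = L * (eLpNorm (fun p : H × H => p.1 - p.2) 1 (σ k)).toReal := by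
        rw [integral_const_mul, eLpNorm_one_eq_lintegral_enorm,
          integral_norm_eq_lintegral_enorm c.aestronglyMeasurable]
    _ ≤ _ := by
        gcongr

theorem exists_near {μ : ℕ → Measure H} {ν : Measure H} [IsProbabilityMeasure ν]
    (hp : ∀ k, IsProbabilityMeasure (μ k)) (hν : HasFiniteSecondMoment ν)
    (hμ : ∀ k, HasFiniteSecondMoment (μ k))
    (hW2 : Tendsto (fun k => W2sq (μ k) ν) atTop (nhds 0)) :
    ∃ σ : ℕ → Measure (H × H), (∀ k, IsCoupling (μ k) ν (σ k)) ∧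
      Tendsto (fun k => planN (σ k)) atTop (𝓝 0) := by
  have hex : ∀ k, ∃ σ, IsCoupling (μ k) ν σ ∧
      (planN σ ^ 2).toReal < W2sq (μ k) ν + 1 / ((k : ℝ) + 1) := by
    intro k
    have := hp k
    have hne : {r : ℝ | ∃ π : Measure (H × H), IsCoupling (μ k) ν π ∧
        r = ∫ p, ‖p.1 - p.2‖ ^ 2 ∂π}.Nonempty := by
      refine ⟨_, (μ k).prod ν, ⟨?_, ?_⟩, rfl⟩
      · exact Measure.fst_prod
      · exact Measure.snd_prod
    obtain ⟨r, ⟨σ, hσ, rfl⟩, hr⟩ := exists_lt_of_csInf_lt hne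
      (b := W2sq (μ k) ν + 1 / ((k : ℝ) + 1)) (lt_add_of_pos_right _ (by positivity))
    rw [integral_sq_eq] at hr
    exact ⟨σ, hσ, hr⟩
  choose σ hσ hlt using hex
  refine ⟨σ, hσ, ?_⟩
  have hlim : Tendsto (fun k : ℕ => W2sq (μ k) ν + 1 / ((k : ℝ) + 1)) atTop (𝓝 0) := by
    simpa using hW2.add tendsto_one_div_add_atTop_nhds_zero_nat
  have h1 : Tendsto (fun k => (planN (σ k) ^ 2).toReal) atTop (𝓝 0) :=
    squeeze_zero (fun _ => ENNReal.toReal_nonneg) (fun k => (hlt k).le) hlim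
  have h2 : Tendsto (fun k => (planN (σ k)).toReal) atTop (𝓝 0) := by
    have := (Real.continuous_sqrt.tendsto 0).comp h1
    simp only [Real.sqrt_zero] at this
    refine this.congr fun k => ?_
    simp only [Function.comp, ENNReal.toReal_pow]
    exact Real.sqrt_sq ENNReal.toReal_nonneg
  exact (ENNReal.tendsto_toReal_iff (fun k => planN_ne_top (hμ k) hν (hσ k))
    ENNReal.zero_ne_top).1 (by simpa using h2)

end helpers

/-- If regular sources `μ_k` (finite second moments) converge to `μ` in
Wasserstein-2 and `T_k` is the (unique) optimal transport map from `μ_k` to `ν`, then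
along a subsequence the induced plans `(Id × T_k)_# μ_k` converge weakly to an optimal
transport plan `π ∈ Π(μ,ν)` for the quadratic cost. -/
theorem statement3
    {H : Type*} [NormedAddCommGroup H] [InnerProductSpace ℝ H] [CompleteSpace H]
    [SecondCountableTopology H] [MeasurableSpace H] [BorelSpace H]
    (ν : Measure H) [IsProbabilityMeasure ν] (hν2 : HasFiniteSecondMoment ν)
    (μ : ℕ → Measure H) (hprob : ∀ k, IsProbabilityMeasure (μ k))
    (hreg : ∀ k, IsRegularMeasure (μ k)) (h2 : ∀ k, HasFiniteSecondMoment (μ k))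
    (T : ℕ → H → H) (hT : ∀ k, IsMongeMap (μ k) ν (T k))
    (μlim : Measure H) [IsProbabilityMeasure μlim] (hlim2 : HasFiniteSecondMoment μlim)
    (hW2 : Tendsto (fun k => W2sq (μ k) μlim) atTop (nhds 0)) :
    ∃ φ : ℕ → ℕ, StrictMono φ ∧
      ∃ π : Measure (H × H), IsCoupling μlim ν π ∧
        (∀ π' : Measure (H × H), IsCoupling μlim ν π' →
          ∫ p, quadCost p.1 p.2 ∂π ≤ ∫ p, quadCost p.1 p.2 ∂π') ∧
        ∀ f : BoundedContinuousFunction (H × H) ℝ,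
          Tendsto (fun n => ∫ p, f p ∂((μ (φ n)).map (fun x => (x, T (φ n) x))))
            atTop (nhds (∫ p, f p ∂π)) := by

  obtain ⟨σ, hσ, hσ0⟩ := exists_near hprob hlim2 h2 hW2
  have hweak := tendsto_weak hprob hlim2 h2 σ hσ hσ0
  have hcoup : ∀ k, IsCoupling (μ k) ν ((μ k).map fun x => (x, T k x)) := fun k =>
    graph_coupling (hT k).1 (hT k).2.1
  have hpp : ∀ k, IsProbabilityMeasure ((μ k).map fun x => (x, T k x)) := fun k => by
    have := hprob k
    exact coupling_prob (hcoup k)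
  let P : ℕ → ProbabilityMeasure (H × H) := fun k => mkP ((μ k).map fun x => (x, T k x)) (hpp k)
  -- tightness
  have ht1 : IsTightMeasureSet (Set.range μ) := by
    have hc : IsCompact (closure (Set.range fun k => mkP (μ k) (hprob k))) :=
      hweak.isCompact_insert_range.closure_of_subset (Set.subset_insert _ _)
    refine (isTightMeasureSet_of_isCompact_closure hc).subset ?_
    rintro _ ⟨k, rfl⟩
    exact ⟨mkP (μ k) (hprob k), ⟨k, rfl⟩, rfl⟩
  have ht2 : IsTightMeasureSet {ν} := isTightMeasureSet_singleton
  have htight : IsTightMeasureSet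
      {((m : ProbabilityMeasure (H × H)) : Measure (H × H)) | m ∈ Set.range P} := by
    refine IsTightMeasureSet.prodMk (ht1.subset ?_) (ht2.subset ?_)
    · rintro _ ⟨_, ⟨_, ⟨k, rfl⟩, rfl⟩, rfl⟩
      exact ⟨k, (hcoup k).1.symm⟩
    · rintro _ ⟨_, ⟨_, ⟨k, rfl⟩, rfl⟩, rfl⟩
      exact (hcoup k).2
  have hcomp := isCompact_closure_of_isTightMeasureSet htight
  obtain ⟨π, -, φ, hφ, hPlim⟩ :=
    hcomp.isSeqCompact (fun n => subset_closure (Set.mem_range_self (f := P) n))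
  refine ⟨φ, hφ, (π : Measure (H × H)), ?_, ?_, ?_⟩
  · constructor
    · have h1 := ((ProbabilityMeasure.continuous_map (continuous_fst (X := H) (Y := H))).tendsto
        π).comp hPlim
      have he : ∀ n, (P (φ n)).map (f := Prod.fst) continuous_fst.measurable.aemeasurable
          = mkP (μ (φ n)) (hprob (φ n)) := fun n => Subtype.ext (hcoup (φ n)).1
      have h3 := tendsto_nhds_unique (h1.congr he) (hweak.comp hφ.tendsto_atTop)
      exact congrArg Subtype.val h3
    · have h1 := ((ProbabilityMeasure.continuous_map (continuous_snd (X := H) (Y := H))).tendsto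
        π).comp hPlim
      have he : ∀ n, (P (φ n)).map (f := Prod.snd) continuous_snd.measurable.aemeasurable
          = mkP ν inferInstance := fun n => Subtype.ext (hcoup (φ n)).2
      have h3 := tendsto_nhds_unique (h1.congr he) tendsto_const_nhds
      exact congrArg Subtype.val h3
  · intro π' hπ'
    rw [integral_cost_eq, integral_cost_eq]
    have hfin := planN_ne_top hlim2 hν2 hπ'
    refine mul_le_mul_of_nonneg_left (ENNReal.toReal_mono (ENNReal.pow_ne_top hfin) ?_)
      (by norm_num)
    have hopen : ∀ G, IsOpen G → (π : Measure (H × H)) G ≤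
        atTop.liminf (fun i => (P (φ i) : Measure (H × H)) G) := fun G hG =>
      ProbabilityMeasure.le_liminf_measure_open_of_tendsto hPlim hG
    have hlsc := lintegral_le_liminf_lintegral_of_forall_isOpen_measure_le_liminf_measure
      (f := fun p : H × H => ‖p.1 - p.2‖ ^ 2) (by fun_prop) (fun p => by positivity) hopen
    simp only [← planN_sq] at hlsc
    refine hlsc.trans ?_
    have hbound : ∀ k, planN (P k : Measure (H × H)) ≤ planN (σ k) + planN π' := fun k => by
      have := hprob k
      obtain ⟨γ, hγ, hle⟩ := exists_glue (hσ k) hπ'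
      exact (monge_le (hreg k) (h2 k) hν2 (hT k) hγ).trans hle
    have hlim : Tendsto (fun i => (planN (σ (φ i)) + planN π') ^ 2) atTop
        (𝓝 (planN π' ^ 2)) := by
      have := (hσ0.comp hφ.tendsto_atTop).add (tendsto_const_nhds (x := planN π'))
      rw [zero_add] at this
      exact ((ENNReal.continuous_pow 2).tendsto _).comp this
    rw [← hlim.liminf_eq]
    exact liminf_le_liminf (Eventually.of_forall fun i => pow_le_pow_left' (hbound (φ i)) 2)
  · intro f
    exact ProbabilityMeasure.tendsto_iff_forall_integral_tendsto.1 hPlim f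

end
end

section
/- Let μ be a centered Gaussian measure on a separable Hilbert space H with covariance operator Q and Cameron–Martin space H_Q = Ran(Q^{1/2}). If H_Q is infinite-dimensional (equivalently, Q has infinitely many strictly positive eigenvalues), then μ(H_Q) = 0. -/
open MeasureTheory ProbabilityTheory Filter Topology Metric
open scoped ENNReal NNReal

noncomputable section

local notation "⟪" x ", " y "⟫" => @inner ℝ _ _ x y

/-- The Cameron–Martin space of a covariance operator diagonalized as `Q e_k = λ_k e_k`:
`H_Q = Ran(Q^{1/2}) = {x : Σ_{λ_k>0} ⟨x,e_k⟩²/λ_k < ∞ and ⟨x,e_k⟩ = 0 whenever λ_k = 0}`. -/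
def cameronMartin {H : Type*} [NormedAddCommGroup H] [InnerProductSpace ℝ H]
    (e : HilbertBasis ℕ ℝ H) (lam : ℕ → ℝ) : Set H :=
  {x : H | (∀ k, lam k = 0 → ⟪x, e k⟫ = 0) ∧
    Summable (fun k => if lam k = 0 then (0 : ℝ) else ⟪x, e k⟫ ^ 2 / lam k)}

/-- If the Cameron–Martin space of a centered Gaussian measure `μ` with
covariance `Q` is infinite-dimensional (i.e. `Q` has infinitely many strictly positive
eigenvalues), then `μ(H_Q) = 0`. -/
theorem statement10
    {H : Type*} [NormedAddCommGroup H] [InnerProductSpace ℝ H] [CompleteSpace H]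
    [SecondCountableTopology H] [MeasurableSpace H] [BorelSpace H]
    (e : HilbertBasis ℕ ℝ H) (lam : ℕ → ℝ) (hlam : ∀ k, 0 ≤ lam k) (hsum : Summable lam)
    (Q : H →L[ℝ] H) (hQ : ∀ k, Q (e k) = lam k • e k)
    (hQsa : ∀ x y : H, ⟪Q x, y⟫ = ⟪x, Q y⟫) (hQpos : ∀ x : H, 0 ≤ ⟪Q x, x⟫)
    (μ : Measure H) (hμ : IsCenteredGaussianCov μ Q)
    (hinf : {k : ℕ | 0 < lam k}.Infinite) :
    μ (cameronMartin e lam) = 0 := by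
  obtain ⟨_, hmap⟩ := hμ
  -- the coordinates are standard Gaussian
  set h : ℕ → H := fun k => (Real.sqrt (lam k))⁻¹ • e k with hh
  have hstd : ∀ k, 0 < lam k → μ.map (fun x => ⟪x, h k⟫) = gaussianReal 0 1 := by
    intro k hk
    have hone : ⟪e k, e k⟫ = (1 : ℝ) := by
      rw [real_inner_self_eq_norm_sq, e.orthonormal.1 k]; norm_num
    have hs : Real.sqrt (lam k) ≠ 0 := (Real.sqrt_pos.2 hk).ne'
    have h1 : ⟪Q (h k), h k⟫ = (1 : ℝ) := by
      simp only [hh, map_smul, hQ, inner_smul_left, inner_smul_right, hone]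
      simp only [conj_trivial]
      field_simp
      exact (Real.sq_sqrt hk.le).symm
    rw [hmap, h1, Real.toNNReal_one]
  -- only the smallness of the Gaussian mass of a neighbourhood of zero is needed
  refine le_antisymm (le_of_forall_gt fun δ hδ => ?_) bot_le
  have : NullSingletonClass (gaussianReal 0 1) := nullSingletonClass_gaussianReal one_ne_zero
  have h0 : gaussianReal 0 1 ({0} : Set ℝ) < δ / 2 := by
    rw [measure_singleton]; exact ENNReal.half_pos hδ.ne'
  obtain ⟨U, hU0, hUo, hUδ⟩ := Set.exists_isOpen_lt_of_lt _ _ h0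
  have hU : U ∈ 𝓝 (0 : ℝ) := hUo.mem_nhds (hU0 rfl)
  set B : ℕ → Set H := fun n => {x | ∀ k, n ≤ k → 0 < lam k → ⟪x, h k⟫ ∈ U} with hB
  have hBmono : Monotone B := fun m n hmn x hx k hk => hx k (hmn.trans hk)
  have hsub : cameronMartin e lam ⊆ ⋃ n, B n := by
    rintro x ⟨-, hx⟩
    have ht := (Real.continuous_sqrt.tendsto _).comp hx.tendsto_atTop_zero
    rw [Real.sqrt_zero] at ht
    obtain ⟨r, hr, hrU⟩ := Metric.mem_nhds_iff.1 hU
    obtain ⟨n, hn⟩ := Filter.eventually_atTop.1 (ht.eventually (gt_mem_nhds hr))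
    refine Set.mem_iUnion.2 ⟨n, fun k hk hlk => hrU ?_⟩
    have := hn k hk
    simp only [Function.comp, hlk.ne', if_false] at this
    rw [Real.sqrt_div (sq_nonneg _), Real.sqrt_sq_eq_abs] at this
    rw [Metric.mem_ball, dist_zero_right, Real.norm_eq_abs]
    simp only [hh, inner_smul_right]
    rwa [abs_mul, abs_inv, abs_of_nonneg (Real.sqrt_nonneg _), mul_comm, ← div_eq_mul_inv]
  have hBle : ∀ n, μ (B n) ≤ δ / 2 := by
    intro n
    obtain ⟨k, hk, hnk⟩ := hinf.exists_gt n
    have hm : Measurable (fun x : H => ⟪x, h k⟫) := by fun_prop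
    calc μ (B n) ≤ μ ((fun x : H => ⟪x, h k⟫) ⁻¹' U) :=
          measure_mono fun x hx => hx k hnk.le hk
      _ = gaussianReal 0 1 U := by
          rw [← hstd k hk, Measure.map_apply hm hUo.measurableSet]
      _ ≤ δ / 2 := hUδ.le
  by_cases htop : δ = ∞
  · rw [htop]; exact measure_lt_top _ _
  calc μ (cameronMartin e lam) ≤ μ (⋃ n, B n) := measure_mono hsub
    _ = ⨆ n, μ (B n) := hBmono.measure_iUnion
    _ ≤ δ / 2 := iSup_le hBle
    _ < δ := ENNReal.half_lt_self hδ.ne' htop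

end
end
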